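/- If w is a bounded smooth solution of Δw - (1/2) y·∇w - w/(p-1) + |w|^{p-1}w = 0 on ℝ^n, Gaussian-integrable with its derivatives, and there is a constant C such that for all test functions φ one has ∫|∇φ|²ρ + (1/(p-1))∫φ²ρ - p∫|w|^{p-1}φ²ρ + ∫φ²ρ ≥ 0 (i.e. the smallest eigenvalue of -L is ≥ -1), then w is constant. -/

import Mathlib

open MeasureTheory Real

noncomputable def lap {n : ℕ} (w : EuclideanSpace ℝ (Fin n) → ℝ)
    (y : EuclideanSpace ℝ (Fin n)) : ℝ :=
  ∑ i, fderiv ℝ (fun z => fderiv ℝ w z (EuclideanSpace.single i 1)) y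
      (EuclideanSpace.single i 1)

noncomputable def rho (n : ℕ) (y : EuclideanSpace ℝ (Fin n)) : ℝ :=
  (4 * Real.pi) ^ (-(n : ℝ) / 2) * Real.exp (-‖y‖ ^ 2 / 4)

/-!
Put `q = |w| ^ (p - 1) - 1 / (p - 1)`. The equation reads `Δw - y·∇w / 2 = -q w`, and since
`1 / (p - 1) + 1 = p / (p - 1)`, the spectral bound says `∫ |∇φ|² ρ ≥ p ∫ q φ² ρ` for every test
function `φ`. Take `φ = χ w` with a cutoff `χ`. Integrating by parts against `ρ` gives
`∫ |∇(χ w)|² ρ = ∫ w² |∇χ|² ρ + ∫ q (χ w)² ρ`, so that the spectral bound becomes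
`(p - 1) ∫ |∇(χ w)|² ρ ≤ p ∫ w² |∇χ|² ρ`. If `χ = 1` on the ball of radius `R` and `|∇χ| ≤ C / R`,
the right side is `O(R⁻²)` because `w` is square integrable for `ρ`; hence `∇w = 0`.
-/

open Filter Metric Set
open scoped ContDiff Gradient InnerProductSpace Topology

section Gradient

variable {F : Type*} [NormedAddCommGroup F] [InnerProductSpace ℝ F] [CompleteSpace F]
  {f g : F → ℝ} {x : F}

lemma norm_gradient_eq_norm_fderiv (f : F → ℝ) (x : F) : ‖∇ f x‖ = ‖fderiv ℝ f x‖ := by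
  rw [← toDual_gradient, LinearIsometryEquiv.norm_map]

lemma gradient_fun_mul (hf : DifferentiableAt ℝ f x) (hg : DifferentiableAt ℝ g x) :
    ∇ (fun z => f z * g z) x = f x • ∇ g x + g x • ∇ f x := by
  simp only [gradient, fderiv_fun_mul hf hg, map_add, map_smul]

lemma norm_fderiv_fun_mul_sq (hf : DifferentiableAt ℝ f x) (hg : DifferentiableAt ℝ g x) :
    ‖fderiv ℝ (fun z => f z * g z) x‖ ^ 2
      = g x ^ 2 * ‖fderiv ℝ f x‖ ^ 2 + ⟪∇ (fun z => f z * (f z * g z)) x, ∇ g x⟫_ℝ := by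
  rw [← norm_gradient_eq_norm_fderiv, ← norm_gradient_eq_norm_fderiv,
    gradient_fun_mul hf (hf.fun_mul hg), gradient_fun_mul hf hg, ← real_inner_self_eq_norm_sq,
    ← real_inner_self_eq_norm_sq]
  simp only [inner_add_left, inner_add_right, real_inner_smul_left, real_inner_smul_right,
    real_inner_comm (∇ f x)]
  ring

lemma continuous_gradient_of_contDiff (hf : ContDiff ℝ 1 f) : Continuous (∇ f) :=
  (InnerProductSpace.toDual ℝ F).symm.continuous.comp (hf.continuous_fderiv one_ne_zero)

lemma hasCompactSupport_gradient (hf : HasCompactSupport f) : HasCompactSupport (∇ f) :=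
  (hf.fderiv (𝕜 := ℝ)).comp_left (map_zero _)

end Gradient

lemma exists_contDiff_cutoff (E : Type*) [NormedAddCommGroup E] [NormedSpace ℝ E]
    [FiniteDimensional ℝ E] :
    ∃ C : ℝ, ∀ R > 0, ∃ χ : E → ℝ, ContDiff ℝ ∞ χ ∧ HasCompactSupport χ ∧
      EqOn χ 1 (ball 0 R) ∧ ∀ y, ‖fderiv ℝ χ y‖ ≤ C / R := by
  let f : ContDiffBump (0 : E) := ⟨1, 2, one_pos, one_lt_two⟩
  have hf : ContDiff ℝ ∞ f := f.contDiff
  obtain ⟨C, hC⟩ := (f.hasCompactSupport.fderiv (𝕜 := ℝ)).exists_bound_of_continuous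
    (hf.continuous_fderiv (by simp))
  refine ⟨C, fun R hR => ⟨fun y => f (R⁻¹ • y), by fun_prop,
    f.hasCompactSupport.comp_smul (inv_ne_zero hR.ne'), fun y hy => ?_, fun y => ?_⟩⟩
  · apply f.one_of_mem_closedBall
    rw [mem_closedBall_zero_iff, norm_smul, norm_inv, Real.norm_of_nonneg hR.le,
      inv_mul_le_iff₀ hR, mul_one]
    exact (mem_ball_zero_iff.1 hy).le
  · rw [fderiv_comp_smul (f := f), norm_smul, norm_inv, Real.norm_of_nonneg hR.le, div_eq_inv_mul]
    gcongr
    exact hC _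

lemma eq_zero_of_tendsto_setIntegral_ball {X : Type*} [MetricSpace X] [ProperSpace X]
    [MeasurableSpace X] [OpensMeasurableSpace X] {μ : Measure X} [IsFiniteMeasureOnCompacts μ]
    [μ.IsOpenPosMeasure] {f : X → ℝ} (hf : Continuous f) (hf0 : 0 ≤ f) (c : X)
    (h : Tendsto (fun R : ℝ => ∫ x in ball c R, f x ∂μ) atTop (𝓝 0)) : f = 0 := by
  have hint (R : ℝ) : IntegrableOn f (ball c R) μ :=
    (hf.continuousOn.integrableOn_compact (isCompact_closedBall c R)).mono_set
      ball_subset_closedBall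
  have hmono : Monotone fun R : ℝ => ∫ x in ball c R, f x ∂μ := fun _ _ hRS =>
    setIntegral_mono_set (hint _) (ae_of_all _ hf0) (ball_subset_ball hRS).eventuallyLE
  have hzero (R : ℝ) : ∫ x in ball c R, f x ∂μ = 0 :=
    (hmono.ge_of_tendsto h R).antisymm (integral_nonneg hf0)
  funext x
  have hae := (setIntegral_eq_zero_iff_of_nonneg_ae (ae_of_all _ hf0) (hint _)).1
    (hzero (dist x c + 1))
  exact Measure.eqOn_open_of_ae_eq hae isOpen_ball hf.continuousOn continuousOn_const
    (mem_ball.2 (lt_add_one _))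

section GaussianWeight

variable {n : ℕ}

local notation "𝔼" => EuclideanSpace ℝ (Fin n)

lemma rho_pos (y : 𝔼) : 0 < rho n y := by
  unfold rho
  positivity

lemma contDiff_rho : ContDiff ℝ ∞ (rho n) := by
  have := contDiff_norm_sq ℝ (E := 𝔼) (n := ∞)
  unfold rho
  fun_prop

lemma continuous_rho : Continuous (rho n) :=
  contDiff_rho.continuous

lemma fderiv_rho (y v : 𝔼) : fderiv ℝ (rho n) y v = -(1 / 2) * ⟪y, v⟫_ℝ * rho n y := by
  have hrho := (((hasStrictFDerivAt_norm_sq y).hasFDerivAt.const_mul (-(1 / 4))).exp).const_mul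
    ((4 * Real.pi) ^ (-(n : ℝ) / 2))
  have hform : rho n = fun z : 𝔼 =>
      (4 * Real.pi) ^ (-(n : ℝ) / 2) * Real.exp (-(1 / 4) * ‖z‖ ^ 2) := by
    funext z
    rw [rho]
    ring_nf
  rw [hform, hrho.fderiv]
  simp only [neg_smul, smul_neg, neg_apply, smul_apply, coe_innerSL_apply, nsmul_eq_mul,
    Nat.cast_ofNat, smul_eq_mul]
  ring

lemma integrable_mul_rho_of_hasCompactSupport {f : 𝔼 → ℝ} (hf : Continuous f)
    (hfc : HasCompactSupport f) : Integrable fun y => f y * rho n y :=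
  (hf.mul continuous_rho).integrable_of_hasCompactSupport hfc.mul_right

lemma hasCompactSupport_norm_fderiv_sq {f : 𝔼 → ℝ} (hf : HasCompactSupport f) :
    HasCompactSupport fun y => ‖fderiv ℝ f y‖ ^ 2 :=
  (hf.fderiv (𝕜 := ℝ)).mono fun y hy h => hy (by simp [h])

lemma integral_mul_fderiv_sub_inner_mul_rho {ψ g : 𝔼 → ℝ} (hψ : ContDiff ℝ 1 ψ)
    (hψc : HasCompactSupport ψ) (hg : ContDiff ℝ 1 g) (v : 𝔼) :
    ∫ y, ψ y * (fderiv ℝ g y v - 1 / 2 * ⟪y, v⟫_ℝ * g y) * rho n y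
      = -∫ y, fderiv ℝ ψ y v * g y * rho n y := by
  have hgρ : ContDiff ℝ 1 fun y => g y * rho n y := hg.mul (contDiff_infty.1 contDiff_rho 1)
  have hderiv (y : 𝔼) : fderiv ℝ (fun z => g z * rho n z) y v
      = (fderiv ℝ g y v - 1 / 2 * ⟪y, v⟫_ℝ * g y) * rho n y := by
    rw [fderiv_fun_mul (hg.differentiable one_ne_zero y)
      (contDiff_rho.differentiable (by simp) y)]
    simp only [add_apply, smul_apply, smul_eq_mul, fderiv_rho]
    ring
  have hψ' : Continuous fun y => fderiv ℝ ψ y v :=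
    (hψ.continuous_fderiv one_ne_zero).clm_apply continuous_const
  have hgρ' : Continuous fun y => fderiv ℝ (fun z => g z * rho n z) y v :=
    (hgρ.continuous_fderiv one_ne_zero).clm_apply continuous_const
  simp only [mul_assoc (ψ _), mul_assoc (fderiv ℝ ψ _ v), ← hderiv]
  exact integral_mul_fderiv_eq_neg_fderiv_mul_of_integrable
    ((hψ'.mul hgρ.continuous).integrable_of_hasCompactSupport (hψc.fderiv_apply ℝ v).mul_right)
    ((hψ.continuous.mul hgρ').integrable_of_hasCompactSupport hψc.mul_right)
    ((hψ.continuous.mul hgρ.continuous).integrable_of_hasCompactSupport hψc.mul_right)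
    (fun y _ => hψ.differentiable one_ne_zero y) (fun y _ => hgρ.differentiable one_ne_zero y)

/-- The Ornstein-Uhlenbeck operator `Δ - (1/2) y·∇`, the linear part of the self-similar equation;
it is symmetric for the weight `rho`. -/
noncomputable def ornsteinUhlenbeck (w : 𝔼 → ℝ) (y : 𝔼) : ℝ :=
  lap w y - (1 / 2) * fderiv ℝ w y y

lemma ornsteinUhlenbeck_eq_sum (w : 𝔼 → ℝ) (y : 𝔼) :
    ornsteinUhlenbeck w y = ∑ i, (fderiv ℝ (fun z => fderiv ℝ w z (EuclideanSpace.single i 1)) y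
      (EuclideanSpace.single i 1) - 1 / 2 * ⟪y, EuclideanSpace.single i 1⟫_ℝ
        * fderiv ℝ w y (EuclideanSpace.single i 1)) := by
  have hdrift : fderiv ℝ w y y = ∑ i, ⟪y, EuclideanSpace.single i 1⟫_ℝ
      * fderiv ℝ w y (EuclideanSpace.single i 1) := by
    simpa [real_inner_comm, inner_gradient_left] using
      ((EuclideanSpace.basisFun (Fin n) ℝ).sum_inner_mul_inner y (∇ w y)).symm
  simp only [ornsteinUhlenbeck, lap, hdrift, Finset.sum_sub_distrib, Finset.mul_sum, mul_assoc]

lemma inner_gradient_eq_sum (ψ w : 𝔼 → ℝ) (y : 𝔼) :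
    ⟪∇ ψ y, ∇ w y⟫_ℝ = ∑ i, fderiv ℝ ψ y (EuclideanSpace.single i 1)
      * fderiv ℝ w y (EuclideanSpace.single i 1) := by
  simpa [inner_gradient_left, inner_gradient_right] using
    ((EuclideanSpace.basisFun (Fin n) ℝ).sum_inner_mul_inner (∇ ψ y) (∇ w y)).symm

lemma integral_mul_ornsteinUhlenbeck_mul_rho {ψ w : 𝔼 → ℝ} (hψ : ContDiff ℝ 1 ψ)
    (hψc : HasCompactSupport ψ) (hw : ContDiff ℝ 2 w) :
    ∫ y, ψ y * ornsteinUhlenbeck w y * rho n y = -∫ y, ⟪∇ ψ y, ∇ w y⟫_ℝ * rho n y := by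
  have hdw (v : 𝔼) : ContDiff ℝ 1 fun y => fderiv ℝ w y v :=
    (hw.fderiv_right (by norm_num)).clm_apply contDiff_const
  have hcont (v : 𝔼) : Continuous fun y => fderiv ℝ (fun z => fderiv ℝ w z v) y v :=
    ((hdw v).continuous_fderiv one_ne_zero).clm_apply continuous_const
  have hψ' (v : 𝔼) : Continuous fun y => fderiv ℝ ψ y v :=
    (hψ.continuous_fderiv one_ne_zero).clm_apply continuous_const
  have hleft (v : 𝔼) : Integrable fun y =>
      ψ y * (fderiv ℝ (fun z => fderiv ℝ w z v) y v - 1 / 2 * ⟪y, v⟫_ℝ * fderiv ℝ w y v)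
        * rho n y :=
    integrable_mul_rho_of_hasCompactSupport
      (hψ.continuous.mul ((hcont v).sub (.mul (by fun_prop) (hdw v).continuous))) hψc.mul_right
  have hright (v : 𝔼) : Integrable fun y => fderiv ℝ ψ y v * fderiv ℝ w y v * rho n y :=
    integrable_mul_rho_of_hasCompactSupport ((hψ' v).mul (hdw v).continuous)
      (hψc.fderiv_apply ℝ v).mul_right
  simp only [ornsteinUhlenbeck_eq_sum, inner_gradient_eq_sum, Finset.mul_sum, Finset.sum_mul]
  rw [integral_finsetSum _ fun i _ => hleft _, integral_finsetSum _ fun i _ => hright _,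
    ← Finset.sum_neg_distrib]
  exact Finset.sum_congr rfl fun i _ => integral_mul_fderiv_sub_inner_mul_rho hψ hψc (hdw _) _

lemma integral_norm_fderiv_fun_mul_sq_mul_rho {χ w q : 𝔼 → ℝ} (hχ : ContDiff ℝ 1 χ)
    (hχc : HasCompactSupport χ) (hw : ContDiff ℝ 2 w)
    (heq : ∀ y, ornsteinUhlenbeck w y = -(q y * w y)) :
    ∫ y, ‖fderiv ℝ (fun z => χ z * w z) y‖ ^ 2 * rho n y
      = (∫ y, w y ^ 2 * ‖fderiv ℝ χ y‖ ^ 2 * rho n y)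
        + ∫ y, q y * (χ y * w y) ^ 2 * rho n y := by
  have hw₁ : ContDiff ℝ 1 w := hw.of_le one_le_two
  have hψ : ContDiff ℝ 1 fun y => χ y * (χ y * w y) := hχ.mul (hχ.mul hw₁)
  have hψc : HasCompactSupport fun y => χ y * (χ y * w y) := hχc.mul_right
  have hcut : Integrable fun y => w y ^ 2 * ‖fderiv ℝ χ y‖ ^ 2 * rho n y :=
    integrable_mul_rho_of_hasCompactSupport
      ((hw.continuous.pow 2).mul ((hχ.continuous_fderiv one_ne_zero).norm.pow 2))
      (hasCompactSupport_norm_fderiv_sq hχc).mul_left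
  have hcross : Integrable fun y => ⟪∇ (fun z => χ z * (χ z * w z)) y, ∇ w y⟫_ℝ * rho n y :=
    integrable_mul_rho_of_hasCompactSupport
      ((continuous_gradient_of_contDiff hψ).inner (continuous_gradient_of_contDiff hw₁))
      ((hasCompactSupport_gradient hψc).mono fun y hy h => hy (by simp [h]))
  calc ∫ y, ‖fderiv ℝ (fun z => χ z * w z) y‖ ^ 2 * rho n y
    _ = ∫ y, (w y ^ 2 * ‖fderiv ℝ χ y‖ ^ 2 * rho n y
          + ⟪∇ (fun z => χ z * (χ z * w z)) y, ∇ w y⟫_ℝ * rho n y) := by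
      congr 1 with y
      rw [norm_fderiv_fun_mul_sq (hχ.differentiable one_ne_zero y)
        (hw₁.differentiable one_ne_zero y), add_mul]
    _ = (∫ y, w y ^ 2 * ‖fderiv ℝ χ y‖ ^ 2 * rho n y)
          - ∫ y, χ y * (χ y * w y) * ornsteinUhlenbeck w y * rho n y := by
      rw [integral_add hcut hcross, integral_mul_ornsteinUhlenbeck_mul_rho hψ hψc hw,
        sub_neg_eq_add]
    _ = _ := by
      rw [sub_eq_add_neg, ← integral_neg]
      congr 2 with y
      rw [heq]
      ring

/-- The quadratic form `∫ |∇φ|² ρ - ∫ V φ² ρ` of the Schrödinger operator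
`-(Δ - (1/2) y·∇ + V)` on the Gaussian space. -/
noncomputable def gaussianForm (V φ : 𝔼 → ℝ) : ℝ :=
  (∫ y, ‖fderiv ℝ φ y‖ ^ 2 * rho n y) - ∫ y, V y * φ y ^ 2 * rho n y

lemma gaussianForm_mul_eq {χ w q : 𝔼 → ℝ} (hχ : ContDiff ℝ 1 χ) (hχc : HasCompactSupport χ)
    (hw : ContDiff ℝ 2 w) (heq : ∀ y, ornsteinUhlenbeck w y = -(q y * w y)) (p : ℝ) :
    gaussianForm (fun y => p * q y) (fun y => χ y * w y)
      = p * (∫ y, w y ^ 2 * ‖fderiv ℝ χ y‖ ^ 2 * rho n y)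
        - (p - 1) * ∫ y, ‖fderiv ℝ (fun z => χ z * w z) y‖ ^ 2 * rho n y := by
  have henergy := integral_norm_fderiv_fun_mul_sq_mul_rho hχ hχc hw heq
  simp only [gaussianForm, mul_assoc p, integral_const_mul]
  linear_combination p * henergy

lemma setIntegral_ball_le_integral_norm_fderiv_fun_mul_sq {χ w : 𝔼 → ℝ} {R : ℝ}
    (hχ : ContDiff ℝ 1 χ) (hχc : HasCompactSupport χ) (hχR : EqOn χ 1 (ball 0 R))
    (hw : ContDiff ℝ 1 w) :
    ∫ y in ball 0 R, ‖fderiv ℝ w y‖ ^ 2 * rho n y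
      ≤ ∫ y, ‖fderiv ℝ (fun z => χ z * w z) y‖ ^ 2 * rho n y := by
  have hint : Integrable fun y => ‖fderiv ℝ (fun z => χ z * w z) y‖ ^ 2 * rho n y :=
    integrable_mul_rho_of_hasCompactSupport
      (((hχ.mul hw).continuous_fderiv one_ne_zero).norm.pow 2)
      (hasCompactSupport_norm_fderiv_sq hχc.mul_right)
  have hlocal (y : 𝔼) (hy : y ∈ ball 0 R) :
      fderiv ℝ w y = fderiv ℝ (fun z => χ z * w z) y := by
    refine EventuallyEq.fderiv_eq ?_
    filter_upwards [isOpen_ball.mem_nhds hy] with z hz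
    simp [hχR hz]
  rw [setIntegral_congr_fun measurableSet_ball fun y hy => by rw [hlocal y hy]]
  exact setIntegral_le_integral hint
    (ae_of_all _ fun y => mul_nonneg (sq_nonneg _) (rho_pos y).le)

lemma integral_sq_mul_norm_fderiv_sq_le {χ w : 𝔼 → ℝ} {K : ℝ}
    (hχK : ∀ y, ‖fderiv ℝ χ y‖ ≤ K) (hint : Integrable fun y => w y ^ 2 * rho n y) :
    ∫ y, w y ^ 2 * ‖fderiv ℝ χ y‖ ^ 2 * rho n y ≤ K ^ 2 * ∫ y, w y ^ 2 * rho n y := by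
  rw [← integral_const_mul]
  refine integral_mono_of_nonneg (ae_of_all _ fun y => ?_) (hint.const_mul _)
    (ae_of_all _ fun y => ?_)
  · have := rho_pos y
    simp only [Pi.zero_apply]
    positivity
  · have := rho_pos y
    calc w y ^ 2 * ‖fderiv ℝ χ y‖ ^ 2 * rho n y
      _ ≤ w y ^ 2 * K ^ 2 * rho n y := by gcongr; exact hχK y
      _ = K ^ 2 * (w y ^ 2 * rho n y) := by ring

lemma tendsto_setIntegral_ball_norm_fderiv_sq {p : ℝ} (hp : 1 < p) {w q : 𝔼 → ℝ}
    (hw : ContDiff ℝ ∞ w) (heq : ∀ y, ornsteinUhlenbeck w y = -(q y * w y))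
    (hint : Integrable fun y => w y ^ 2 * rho n y)
    (hstab : ∀ φ : 𝔼 → ℝ, ContDiff ℝ ∞ φ → HasCompactSupport φ →
      0 ≤ gaussianForm (fun y => p * q y) φ) :
    Tendsto (fun R : ℝ => ∫ y in ball (0 : 𝔼) R, ‖fderiv ℝ w y‖ ^ 2 * rho n y) atTop (𝓝 0) := by
  obtain ⟨C, hC⟩ := exists_contDiff_cutoff 𝔼
  have hp₁ : 0 < p - 1 := sub_pos.2 hp
  have hbound (R : ℝ) (hR : 0 < R) : ∫ y in ball (0 : 𝔼) R, ‖fderiv ℝ w y‖ ^ 2 * rho n y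
      ≤ p / (p - 1) * ((C / R) ^ 2 * ∫ y, w y ^ 2 * rho n y) := by
    obtain ⟨χ, hχ, hχc, hχR, hχC⟩ := hC R hR
    have hχ₁ : ContDiff ℝ 1 χ := contDiff_infty.1 hχ 1
    have hform := hstab _ (hχ.mul hw) hχc.mul_right
    rw [gaussianForm_mul_eq hχ₁ hχc (contDiff_infty.1 hw 2) heq, sub_nonneg] at hform
    calc ∫ y in ball (0 : 𝔼) R, ‖fderiv ℝ w y‖ ^ 2 * rho n y
      _ ≤ ∫ y, ‖fderiv ℝ (fun z => χ z * w z) y‖ ^ 2 * rho n y :=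
        setIntegral_ball_le_integral_norm_fderiv_fun_mul_sq hχ₁ hχc hχR (contDiff_infty.1 hw 1)
      _ ≤ p / (p - 1) * ∫ y, w y ^ 2 * ‖fderiv ℝ χ y‖ ^ 2 * rho n y := by
        rwa [div_mul_eq_mul_div, le_div_iff₀' hp₁]
      _ ≤ _ := by
        gcongr
        exact integral_sq_mul_norm_fderiv_sq_le hχC hint
  have hlim : Tendsto (fun R : ℝ => p / (p - 1) * ((C / R) ^ 2 * ∫ y, w y ^ 2 * rho n y))
      atTop (𝓝 0) := by
    simpa using (((tendsto_id.const_div_atTop C).pow 2).mul_const _).const_mul _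
  refine tendsto_of_tendsto_of_tendsto_of_le_of_le' tendsto_const_nhds hlim
    (.of_forall fun R => integral_nonneg fun y => mul_nonneg (sq_nonneg _) (rho_pos y).le) ?_
  filter_upwards [eventually_gt_atTop 0] with R hR using hbound R hR

lemma gaussianForm_rpow_sub_eq {p : ℝ} (hp : 1 < p) {w φ : 𝔼 → ℝ} (hw : Continuous w)
    (hφ : Continuous φ) (hφc : HasCompactSupport φ) :
    gaussianForm (fun y => p * (|w y| ^ (p - 1) - 1 / (p - 1))) φ
      = (∫ y, ‖fderiv ℝ φ y‖ ^ 2 * rho n y)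
          + 1 / (p - 1) * (∫ y, φ y ^ 2 * rho n y)
          - p * (∫ y, |w y| ^ (p - 1) * φ y ^ 2 * rho n y)
          + ∫ y, φ y ^ 2 * rho n y := by
  have hp₁ : 0 < p - 1 := sub_pos.2 hp
  have hφ2c : HasCompactSupport fun y => φ y ^ 2 :=
    hφc.mono fun y hy h => hy (by simp [h])
  have hφ2 : Integrable fun y => φ y ^ 2 * rho n y :=
    integrable_mul_rho_of_hasCompactSupport (hφ.pow 2) hφ2c
  have hpow : Integrable fun y => |w y| ^ (p - 1) * φ y ^ 2 * rho n y :=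
    integrable_mul_rho_of_hasCompactSupport
      ((hw.abs.rpow_const fun _ => .inr hp₁.le).mul (hφ.pow 2)) hφ2c.mul_left
  have hsplit : ∫ y, p * (|w y| ^ (p - 1) - 1 / (p - 1)) * φ y ^ 2 * rho n y
      = p * (∫ y, |w y| ^ (p - 1) * φ y ^ 2 * rho n y)
        - p / (p - 1) * ∫ y, φ y ^ 2 * rho n y := by
    rw [← integral_const_mul, ← integral_const_mul,
      ← integral_sub (hpow.const_mul _) (hφ2.const_mul _)]
    congr 1 with y
    ring
  have hcoeff : p / (p - 1) = 1 / (p - 1) + 1 := by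
    field_simp
    ring
  rw [gaussianForm, hsplit, hcoeff]
  ring

theorem constant_of_spectral_bound_general {p : ℝ} (hp : 1 < p) {w q : 𝔼 → ℝ}
    (hw : ContDiff ℝ ∞ w) (heq : ∀ y, ornsteinUhlenbeck w y = -(q y * w y))
    (hint : Integrable fun y => w y ^ 2 * rho n y)
    (hstab : ∀ φ : 𝔼 → ℝ, ContDiff ℝ ∞ φ → HasCompactSupport φ →
      0 ≤ gaussianForm (fun y => p * q y) φ) (y z : 𝔼) :
    w y = w z := by
  have hcont : Continuous fun y => ‖fderiv ℝ w y‖ ^ 2 * rho n y :=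
    ((hw.continuous_fderiv (by simp)).norm.pow 2).mul continuous_rho
  have henergy : (fun y => ‖fderiv ℝ w y‖ ^ 2 * rho n y) = 0 :=
    eq_zero_of_tendsto_setIntegral_ball hcont
      (fun y => mul_nonneg (sq_nonneg _) (rho_pos y).le) 0
      (tendsto_setIntegral_ball_norm_fderiv_sq hp hw heq hint hstab)
  refine is_const_of_fderiv_eq_zero (𝕜 := ℝ) (hw.differentiable (by simp)) (fun x => ?_) y z
  simpa [(rho_pos x).ne'] using congrFun henergy x

end GaussianWeight

/-- If the smallest eigenvalue of `-L` is `≥ -1` (i.e. the shifted quadratic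
form is nonnegative on all test functions), then the bounded smooth solution
`w` of the self-similar equation is constant. -/
theorem constant_of_spectral_bound
    (n : ℕ) (p : ℝ) (hp : 1 < p) (w : EuclideanSpace ℝ (Fin n) → ℝ)
    (hsmooth : ContDiff ℝ (⊤ : ℕ∞) w)
    (hbd : ∃ M : ℝ, ∀ y, |w y| ≤ M ∧ ‖fderiv ℝ w y‖ ≤ M ∧
        ‖fderiv ℝ (fderiv ℝ w) y‖ ≤ M)
    (heq : ∀ y, lap w y - (1 / 2) * fderiv ℝ w y y - w y / (p - 1)
        + |w y| ^ (p - 1) * w y = 0)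
    (hint1 : Integrable (fun y => ‖fderiv ℝ w y‖ ^ 2 * rho n y))
    (hint2 : Integrable (fun y => (w y) ^ 2 * rho n y))
    (hint3 : Integrable (fun y => |w y| ^ (p + 1) * rho n y))
    (hstab : ∀ φ : EuclideanSpace ℝ (Fin n) → ℝ, ContDiff ℝ (⊤ : ℕ∞) φ →
      HasCompactSupport φ →
      0 ≤ (∫ y, ‖fderiv ℝ φ y‖ ^ 2 * rho n y)
          + (1 / (p - 1)) * (∫ y, (φ y) ^ 2 * rho n y)
          - p * (∫ y, |w y| ^ (p - 1) * (φ y) ^ 2 * rho n y)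
          + (∫ y, (φ y) ^ 2 * rho n y)) :
    ∀ y z : EuclideanSpace ℝ (Fin n), w y = w z := by
  exact constant_of_spectral_bound_general hp (q := fun y => |w y| ^ (p - 1) - 1 / (p - 1)) hsmooth
    (fun y => by unfold ornsteinUhlenbeck; linear_combination heq y) hint2
    fun φ hφ hφc => (hstab φ hφ hφc).trans_eq
      (gaussianForm_rpow_sub_eq hp hsmooth.continuous hφ.continuous hφc).symm
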